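/- Let u be a nonzero vector in E_tW and v a nonzero vector in E*_rW. Then {E*_{r+i}u}_{i=0}^d is a basis for W, and {E_{t+i}v}_{i=0}^d is a basis for W. -/

import Mathlib

open Matrix
open scoped Classical

noncomputable section

/-- The full setup: a `Q`-polynomial distance-regular graph `Γ = (X,R)` of diameter `D ≥ 3`,
with adjacency matrix `A`, primitive idempotents `E_i`, eigenvalues `θ_i`,
Krein parameters `q^h_{ij}`, a fixed base vertex `x`, dual primitive idempotents `E*_i`,
dual adjacency matrix `A*` and dual eigenvalues `θ*_i`. -/
structure TSetup (X : Type*) [Fintype X] [DecidableEq X] where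
  G : SimpleGraph X
  hGconn : G.Connected
  D : ℕ
  hD3 : 3 ≤ D
  hDiamLe : ∀ y z : X, G.dist y z ≤ D
  hDiamEq : ∃ y z : X, G.dist y z = D
  p : ℕ → ℕ → ℕ → ℕ
  hDRG : ∀ h i j : ℕ, h ≤ D → i ≤ D → j ≤ D → ∀ y z : X, G.dist y z = h →
    Nat.card {w : X // G.dist y w = i ∧ G.dist z w = j} = p h i j
  A : Matrix X X ℂ
  hA : ∀ y z : X, A y z = if G.Adj y z then 1 else 0
  E : ℕ → Matrix X X ℂ
  hEzero : ∀ i : ℕ, D < i → E i = 0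
  hEsum : ∑ i ∈ Finset.range (D + 1), E i = 1
  hEidem : ∀ i j : ℕ, i ≤ D → j ≤ D → E i * E j = if i = j then E i else 0
  hEsymm : ∀ i : ℕ, (E i)ᵀ = E i
  hEreal : ∀ i : ℕ, (E i).map (starRingEnd ℂ) = E i
  hE0 : E 0 = (Fintype.card X : ℂ)⁻¹ • Matrix.of (fun _ _ => (1 : ℂ))
  θ : ℕ → ℝ
  hθinj : ∀ i j : ℕ, i ≤ D → j ≤ D → θ i = θ j → i = j
  hAspec : A = ∑ i ∈ Finset.range (D + 1), (θ i : ℂ) • E i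
  q : ℕ → ℕ → ℕ → ℝ
  hKrein : ∀ i j : ℕ, i ≤ D → j ≤ D →
    Matrix.hadamard (E i) (E j) =
      (Fintype.card X : ℂ)⁻¹ • ∑ h ∈ Finset.range (D + 1), (q h i j : ℂ) • E h
  hQpoly0 : ∀ h i j : ℕ, h ≤ D → i ≤ D → j ≤ D →
    (i + j < h ∨ h + j < i ∨ h + i < j) → q h i j = 0
  hQpoly1 : ∀ h i j : ℕ, h ≤ D → i ≤ D → j ≤ D →
    (h = i + j ∨ i = h + j ∨ j = h + i) → q h i j ≠ 0
  x : X
  Estar : ℕ → Matrix X X ℂ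
  hEstarzero : ∀ i : ℕ, D < i → Estar i = 0
  hEstar : ∀ i : ℕ, i ≤ D → ∀ y z : X,
    Estar i y z = if y = z ∧ G.dist x y = i then 1 else 0
  Astar : Matrix X X ℂ
  hAstar : ∀ y z : X, Astar y z = if y = z then (Fintype.card X : ℂ) * E 1 x y else 0
  θstar : ℕ → ℝ
  hθstarinj : ∀ i j : ℕ, i ≤ D → j ≤ D → θstar i = θstar j → i = j
  hAstarspec : Astar = ∑ i ∈ Finset.range (D + 1), (θstar i : ℂ) • Estar i

variable {X : Type*} [Fintype X] [DecidableEq X]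

/-- The Terwilliger algebra `T = T(x)`, generated by `A` and `A*`. -/
def TSetup.T (S : TSetup X) : Subalgebra ℂ (Matrix X X ℂ) :=
  Algebra.adjoin ℂ {S.A, S.Astar}

/-- A thin irreducible `T`-module `W` with endpoint `r`, dual endpoint `t` and diameter `d`,
where `E*_i W ≠ 0` iff `r ≤ i ≤ r + d` and `E_i W ≠ 0` iff `t ≤ i ≤ t + d`. -/
structure TMod (S : TSetup X) where
  W : Submodule ℂ (X → ℂ)
  hWinv : ∀ B ∈ S.T, ∀ w ∈ W, B *ᵥ w ∈ W
  hWne : W ≠ ⊥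
  hWirr : ∀ U : Submodule ℂ (X → ℂ), U ≤ W →
    (∀ B ∈ S.T, ∀ w ∈ U, B *ᵥ w ∈ U) → U = ⊥ ∨ U = W
  hthin : ∀ i : ℕ, Module.finrank ℂ (W.map (S.Estar i).mulVecLin) ≤ 1
  r : ℕ
  t : ℕ
  d : ℕ
  hr : ∀ i : ℕ, W.map (S.Estar i).mulVecLin ≠ ⊥ ↔ r ≤ i ∧ i ≤ r + d
  ht : ∀ i : ℕ, W.map (S.E i).mulVecLin ≠ ⊥ ↔ t ≤ i ∧ i ≤ t + d

open Classical in
/-- The action of a matrix `B` on `W` (the restriction of `B` to `W`; defined to be `0`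
if `B` does not leave `W` invariant). -/
def actW (S : TSetup X) (M : TMod S) (B : Matrix X X ℂ) : M.W →ₗ[ℂ] M.W :=
  if h : ∀ w ∈ M.W, B.mulVecLin w ∈ M.W then B.mulVecLin.restrict h else 0

/-- `tr_W(B)`: the trace of the action of `B` on `W`. -/
def trW (S : TSetup X) (M : TMod S) (B : Matrix X X ℂ) : ℂ :=
  LinearMap.trace ℂ M.W (actW S M B)

/-- `a_i(W) = tr_W(E*_{r+i} A)`. -/
def aW (S : TSetup X) (M : TMod S) (i : ℕ) : ℂ :=
  trW S M (S.Estar (M.r + i) * S.A)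

/-- `x_i(W) = tr_W(E*_{r+i} A E*_{r+i-1} A)`, with `x_0(W) = 0`. -/
def xW (S : TSetup X) (M : TMod S) (i : ℕ) : ℂ :=
  if i = 0 then 0 else trW S M (S.Estar (M.r + i) * S.A * S.Estar (M.r + i - 1) * S.A)

/-- `a*_i(W) = tr_W(E_{t+i} A*)`. -/
def astarW (S : TSetup X) (M : TMod S) (i : ℕ) : ℂ :=
  trW S M (S.E (M.t + i) * S.Astar)

/-- `x*_i(W) = tr_W(E_{t+i} A* E_{t+i-1} A*)`, with `x*_0(W) = 0`. -/
def xstarW (S : TSetup X) (M : TMod S) (i : ℕ) : ℂ :=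
  if i = 0 then 0 else trW S M (S.E (M.t + i) * S.Astar * S.E (M.t + i - 1) * S.Astar)

/-- The polynomials `p_i`: `p_0 = 1`, `p_{-1} = 0`,
`λ p_i = p_{i+1} + a_i(W) p_i + x_i(W) p_{i-1}`. -/
def pW (S : TSetup X) (M : TMod S) : ℕ → Polynomial ℂ
  | 0 => 1
  | 1 => Polynomial.X - Polynomial.C (aW S M 0)
  | (n + 2) =>
      (Polynomial.X - Polynomial.C (aW S M (n + 1))) * pW S M (n + 1)
        - Polynomial.C (xW S M (n + 1)) * pW S M n

/-- The polynomials `p*_i`: `p*_0 = 1`, `p*_{-1} = 0`,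
`λ p*_i = p*_{i+1} + a*_i(W) p*_i + x*_i(W) p*_{i-1}`. -/
def pstarW (S : TSetup X) (M : TMod S) : ℕ → Polynomial ℂ
  | 0 => 1
  | 1 => Polynomial.X - Polynomial.C (astarW S M 0)
  | (n + 2) =>
      (Polynomial.X - Polynomial.C (astarW S M (n + 1))) * pstarW S M (n + 1)
        - Polynomial.C (xstarW S M (n + 1)) * pstarW S M n

/-- The Hermitian inner product `⟨u,v⟩ = Σ_y u_y conj(v_y)` on `ℂ^X`. -/
def herm (u v : X → ℂ) : ℂ := ∑ y, u y * (starRingEnd ℂ) (v y)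

/-- `ν(W)`, the multiplicative inverse of `m_0(W) = tr_W(E_t E*_r)`. -/
def nuW (S : TSetup X) (M : TMod S) : ℂ :=
  (trW S M (S.E M.t * S.Estar M.r))⁻¹

/-- `k_i(W) = ν(W) m*_i(W)` where `m*_i(W) = tr_W(E*_{r+i} E_t)`. -/
def kW (S : TSetup X) (M : TMod S) (i : ℕ) : ℂ :=
  nuW S M * trW S M (S.Estar (M.r + i) * S.E M.t)

/-- `k*_i(W) = ν(W) m_i(W)` where `m_i(W) = tr_W(E_{t+i} E*_r)`. -/
def kstarW (S : TSetup X) (M : TMod S) (i : ℕ) : ℂ :=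
  nuW S M * trW S M (S.E (M.t + i) * S.Estar M.r)

/-! For `v` in `E*_r W`, the span of the `E_i v` is `A`-invariant. Climb the flag
`E*_0 W + ⋯ + E*_j W`: `A` raises it by at most one step by the triangle inequality, and
irreducibility forbids it from being `A`-invariant before it reaches `W`; since each step is at most
one-dimensional, every `A`-invariant subspace containing `v ≠ 0` therefore contains the whole flag.
So the `E_i v` span `W`, whence `E_i W` is spanned by `E_i v`. This makes `W` dual thin, and the same
argument applies with the roles of `A` and `A*` exchanged, because `A*` raises the flag of the
`E_i W` by at most one step: `‖E_i A* E_j‖²` is a multiple of the Krein parameter `q^1_{ij}`. -/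

section Algebra

variable {K R V : Type*} [CommSemiring K] [Semiring R] [Algebra K R] [AddCommMonoid V] [Module K V]

theorem aeval_mul_eq_eval_smul {a x : R} {c : K} (h : a * x = c • x) (p : Polynomial K) :
    Polynomial.aeval a p * x = p.eval c • x := by
  induction p using Polynomial.induction_on with
  | C b => rw [Polynomial.aeval_C, Polynomial.eval_C, Algebra.smul_def]
  | add p q hp hq => rw [map_add, add_mul, hp, hq, Polynomial.eval_add, add_smul]
  | monomial n b ih =>
    rw [pow_succ, ← mul_assoc, map_mul, Polynomial.aeval_X, mul_assoc, h, mul_smul_comm, ih,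
      smul_smul, Polynomial.eval_mul_X, mul_comm]

theorem mem_invtSubmodule_of_mem_adjoin (ρ : R →ₐ[K] Module.End K V) {s : Set R}
    {U : Submodule K V} (hU : ∀ a ∈ s, U ∈ (ρ a).invtSubmodule) {a : R}
    (ha : a ∈ Algebra.adjoin K s) : U ∈ (ρ a).invtSubmodule := by
  induction ha using Algebra.adjoin_induction with
  | mem a ha => exact hU a ha
  | algebraMap c =>
    intro w hw
    simpa only [Submodule.mem_comap, AlgHom.commutes, Module.algebraMap_end_apply]
      using U.smul_mem c hw
  | add a b _ _ ha hb =>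
    intro w hw
    simpa only [Submodule.mem_comap, map_add, LinearMap.add_apply] using U.add_mem (ha hw) (hb hw)
  | mul a b _ _ ha hb =>
    intro w hw
    simpa only [Submodule.mem_comap, map_mul, Module.End.mul_apply] using ha (hb hw)

end Algebra

section OrthogonalIdempotents

variable {ι K R V : Type*} [Field K] [Ring R] [Algebra K R] [AddCommGroup V] [Module K V]

theorem linearIndependent_orthogonalIdempotents_apply {e : ι → Module.End K V}
    (he : OrthogonalIdempotents e) {v : V} (hv : ∀ i, e i v ≠ 0) :
    LinearIndependent K fun i => e i v := by
  rw [linearIndependent_iff']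
  intro s c hc i hi
  have happly : e i (∑ j ∈ s, c j • e j v) = c i • e i v := by
    rw [map_sum, Finset.sum_eq_single_of_mem i hi fun j _ hji => ?_, map_smul,
      ← Module.End.mul_apply, (he.idem i).eq]
    rw [map_smul, ← Module.End.mul_apply, he.ortho hji.symm, LinearMap.zero_apply, smul_zero]
  rw [hc, map_zero] at happly
  exact (smul_eq_zero.1 happly.symm).resolve_right (hv i)

/-- `A` is diagonalizable with spectral projections `E i` and mutually distinct eigenvalues `θ i`,
where `i` ranges over `s`. The family `E` is indexed by all of `ι`; its members outside `s` are
forced to vanish, matching the convention `E_i = 0` for `i` out of range. -/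
structure IsSpectralDecomposition (s : Finset ι) (A : R) (E : ι → R) (θ : ι → K) : Prop
    extends OrthogonalIdempotents E where
  sum_eq_one : ∑ i ∈ s, E i = 1
  eq_sum : A = ∑ i ∈ s, θ i • E i
  injOn : Set.InjOn θ s

namespace IsSpectralDecomposition

section Algebra

variable {s : Finset ι} {A : R} {E : ι → R} {θ : ι → K}

theorem eq_zero (h : IsSpectralDecomposition s A E θ) {k : ι} (hk : k ∉ s) : E k = 0 := by
  rw [← mul_one (E k), ← h.sum_eq_one, h.mul_sum_of_notMem hk]

theorem mul_eq_smul (h : IsSpectralDecomposition s A E θ) (k : ι) : A * E k = θ k • E k := by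
  by_cases hk : k ∈ s
  · rw [h.eq_sum, Finset.sum_mul, Finset.sum_eq_single_of_mem k hk fun i _ hik => ?_,
      smul_mul_assoc, (h.idem k).eq]
    rw [smul_mul_assoc, h.ortho hik, smul_zero]
  · rw [h.eq_zero hk, mul_zero, smul_zero]

theorem aeval_basis (h : IsSpectralDecomposition s A E θ) {k : ι} (hk : k ∈ s) :
    Polynomial.aeval A (Lagrange.basis s θ k) = E k := by
  rw [← mul_one (Polynomial.aeval A _), ← h.sum_eq_one, Finset.mul_sum,
    Finset.sum_eq_single_of_mem k hk fun i hi hik => ?_, aeval_mul_eq_eval_smul (h.mul_eq_smul k),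
    Lagrange.eval_basis_self h.injOn hk, one_smul]
  rw [aeval_mul_eq_eval_smul (h.mul_eq_smul i), Lagrange.eval_basis_of_ne hik.symm hi, zero_smul]

theorem mem_adjoin (h : IsSpectralDecomposition s A E θ) (k : ι) : E k ∈ Algebra.adjoin K {A} := by
  by_cases hk : k ∈ s
  · rw [← h.aeval_basis hk]
    exact Polynomial.aeval_mem_adjoin_singleton K A
  · rw [h.eq_zero hk]
    exact zero_mem _

theorem map {R' : Type*} [Ring R'] [Algebra K R'] (h : IsSpectralDecomposition s A E θ)
    (f : R →ₐ[K] R') : IsSpectralDecomposition s (f A) (f ∘ E) θ where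
  toOrthogonalIdempotents := h.toOrthogonalIdempotents.map f.toRingHom
  sum_eq_one := by simp only [Function.comp_apply, ← map_sum, h.sum_eq_one, map_one]
  eq_sum := by simp only [h.eq_sum, map_sum, map_smul, Function.comp_apply]
  injOn := h.injOn

end Algebra

section Endomorphism

variable {s : Finset ι} {A : Module.End K V} {E : ι → Module.End K V} {θ : ι → K}

theorem sum_apply (h : IsSpectralDecomposition s A E θ) (v : V) : ∑ i ∈ s, E i v = v := by
  rw [← LinearMap.sum_apply, h.sum_eq_one, Module.End.one_apply]

theorem mem_invtSubmodule_iff (h : IsSpectralDecomposition s A E θ) {U : Submodule K V} :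
    U ∈ A.invtSubmodule ↔ ∀ i, U ∈ (E i).invtSubmodule := by
  refine ⟨fun hU i => mem_invtSubmodule_of_mem_adjoin (AlgHom.id K _) ?_ (h.mem_adjoin i),
    fun hU w hw => ?_⟩
  · rintro _ rfl
    exact hU
  · rw [Submodule.mem_comap, h.eq_sum, LinearMap.sum_apply]
    exact U.sum_mem fun i _ => U.smul_mem _ (hU i hw)

theorem span_range_apply_mem_invtSubmodule (h : IsSpectralDecomposition s A E θ) (v : V) :
    Submodule.span K (Set.range fun i => E i v) ∈ A.invtSubmodule := by
  rw [Module.End.mem_invtSubmodule, Submodule.span_le]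
  rintro _ ⟨i, rfl⟩
  rw [SetLike.mem_coe, Submodule.mem_comap, ← Module.End.mul_apply, h.mul_eq_smul]
  exact Submodule.smul_mem _ _ (Submodule.subset_span ⟨i, rfl⟩)

theorem mem_span_range_apply (h : IsSpectralDecomposition s A E θ) (v : V) :
    v ∈ Submodule.span K (Set.range fun i => E i v) := by
  have hsum : ∑ i ∈ s, E i v ∈ Submodule.span K (Set.range fun i => E i v) :=
    Submodule.sum_mem _ fun i _ => Submodule.subset_span ⟨i, rfl⟩
  rwa [h.sum_apply] at hsum

end Endomorphism

end IsSpectralDecomposition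

end OrthogonalIdempotents

section Irreducible

variable {ι K V : Type*} [Field K] [AddCommGroup V] [Module K V]

theorem le_span_singleton_of_isPrincipal {L : Submodule K V} (hL : L.IsPrincipal) {v : V}
    (hv : v ∈ L) (hv0 : v ≠ 0) : L ≤ Submodule.span K {v} := by
  obtain ⟨g, rfl⟩ := hL
  obtain ⟨c, rfl⟩ := Submodule.mem_span_singleton.1 hv
  exact (Submodule.span_singleton_smul_eq (left_ne_zero_of_smul hv0).isUnit g).ge

/-- `W` is an irreducible module for the algebra generated by `A` and `B`: a minimal nonzero
subspace invariant under both. -/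
def IsIrreducibleUnder (A B : Module.End K V) (W : Submodule K V) : Prop :=
  Minimal (fun U => U ≠ ⊥ ∧ U ∈ A.invtSubmodule ∧ U ∈ B.invtSubmodule) W

theorem IsIrreducibleUnder.symm {A B : Module.End K V} {W : Submodule K V}
    (h : IsIrreducibleUnder A B W) : IsIrreducibleUnder B A W := by
  simpa only [IsIrreducibleUnder, and_comm (a := _ ∈ Module.End.invtSubmodule B)] using! h

/-- The flag `F_0 W + ⋯ + F_j W` of an idempotent-invariant subspace `W`, encoded as the set of
vectors of `W` with no component beyond `j`. -/
def flag (F : ℕ → Module.End K V) (W : Submodule K V) (j : ℕ) : Submodule K V :=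
  W ⊓ ⨅ k > j, LinearMap.ker (F k)

variable {A B : Module.End K V} {F : ℕ → Module.End K V} {φ : ℕ → K} {s : Finset ℕ}
  {W U : Submodule K V} {v w : V} {j r : ℕ}

theorem mem_flag : w ∈ flag F W j ↔ w ∈ W ∧ ∀ k, j < k → F k w = 0 := by
  simp only [flag, Submodule.mem_inf, Submodule.mem_iInf, LinearMap.mem_ker, gt_iff_lt]

theorem apply_mem_flag (hF : OrthogonalIdempotents F) (hW : W ∈ (F r).invtSubmodule) (hrj : r ≤ j)
    (hw : w ∈ W) : F r w ∈ flag F W j :=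
  mem_flag.2 ⟨hW hw, fun k hk => by
    rw [← Module.End.mul_apply, hF.ortho (hrj.trans_lt hk).ne', LinearMap.zero_apply]⟩

theorem flag_mem_invtSubmodule (hF : OrthogonalIdempotents F) (hW : ∀ i, W ∈ (F i).invtSubmodule)
    (j i : ℕ) : flag F W j ∈ (F i).invtSubmodule := by
  intro w hw
  obtain hij | hji := le_or_gt i j
  · exact apply_mem_flag hF (hW i) hij (mem_flag.1 hw).1
  · rw [Submodule.mem_comap, (mem_flag.1 hw).2 i hji]
    exact zero_mem _

theorem sub_apply_mem_flag (hF : OrthogonalIdempotents F) (hW : W ∈ (F (j + 1)).invtSubmodule)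
    (hw : w ∈ flag F W (j + 1)) : w - F (j + 1) w ∈ flag F W j := by
  refine mem_flag.2 ⟨W.sub_mem (mem_flag.1 hw).1 (hW (mem_flag.1 hw).1), fun k hk => ?_⟩
  rw [map_sub, ← Module.End.mul_apply]
  obtain rfl | hk' := (Nat.succ_le_of_lt hk).eq_or_lt
  · rw [(hF.idem _).eq, sub_self]
  · rw [(mem_flag.1 hw).2 k hk', hF.ortho hk'.ne', LinearMap.zero_apply, sub_zero]

theorem apply_mem_flag_succ (hF : IsSpectralDecomposition s B F φ)
    (hAF : ∀ i j, j + 1 < i → F i * A * F j = 0) (hW : W ∈ A.invtSubmodule)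
    (hw : w ∈ flag F W j) : A w ∈ flag F W (j + 1) := by
  refine mem_flag.2 ⟨hW (mem_flag.1 hw).1, fun k hk => ?_⟩
  rw [← hF.sum_apply w, map_sum, map_sum]
  refine Finset.sum_eq_zero fun i _ => ?_
  obtain hij | hji := le_or_gt i j
  · rw [← Module.End.mul_apply, ← Module.End.mul_apply, hAF k i (by omega), LinearMap.zero_apply]
  · rw [(mem_flag.1 hw).2 i hji, map_zero, map_zero]

theorem flag_eq_self (hF : IsSpectralDecomposition s B F φ) (hj : ∀ k ∈ s, k ≤ j) :
    flag F W j = W :=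
  inf_eq_left.2 fun w _ => by
    simp only [Submodule.mem_iInf, LinearMap.mem_ker]
    exact fun k hk => by rw [hF.eq_zero fun hks => hk.not_ge (hj k hks), LinearMap.zero_apply]

theorem flag_le_of_map_le (hF : IsSpectralDecomposition s B F φ)
    (hlt : ∀ i < r, W.map (F i) = ⊥) (hU : W.map (F r) ≤ U) : flag F W r ≤ U := by
  intro w hw
  rw [← hF.sum_apply w]
  refine U.sum_mem fun i _ => ?_
  obtain hir | rfl | hri := lt_trichotomy i r
  · have hwi : F i w ∈ W.map (F i) := Submodule.mem_map_of_mem (mem_flag.1 hw).1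
    rw [hlt i hir] at hwi
    exact bot_le (a := U) hwi
  · exact hU (Submodule.mem_map_of_mem (mem_flag.1 hw).1)
  · rw [(mem_flag.1 hw).2 i hri]
    exact zero_mem _

theorem flag_succ_le_of_notMem_invtSubmodule (hF : IsSpectralDecomposition s B F φ)
    (hAF : ∀ i j, j + 1 < i → F i * A * F j = 0) (hWA : W ∈ A.invtSubmodule)
    (hWF : W ∈ (F (j + 1)).invtSubmodule) (hthin : (W.map (F (j + 1))).IsPrincipal)
    (hUA : U ∈ A.invtSubmodule) (hjU : flag F W j ≤ U) (hj : flag F W j ∉ A.invtSubmodule) :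
    flag F W (j + 1) ≤ U := by
  obtain ⟨w, hw, hAw⟩ : ∃ w ∈ flag F W j, A w ∉ flag F W j := by
    simpa only [Module.End.mem_invtSubmodule, SetLike.not_le_iff_exists] using! hj
  have hAw_succ : A w ∈ flag F W (j + 1) := apply_mem_flag_succ hF hAF hWA hw
  have hne : F (j + 1) (A w) ≠ 0 := fun h0 => hAw <| by
    simpa only [h0, sub_zero] using sub_apply_mem_flag hF.toOrthogonalIdempotents hWF hAw_succ
  have hmem : F (j + 1) (A w) ∈ U := by
    rw [← U.sub_mem_iff_right (hUA (hjU hw))]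
    exact hjU (sub_apply_mem_flag hF.toOrthogonalIdempotents hWF hAw_succ)
  have hline : W.map (F (j + 1)) ≤ U :=
    (le_span_singleton_of_isPrincipal hthin
      (Submodule.mem_map_of_mem (hWA (mem_flag.1 hw).1)) hne).trans
      ((Submodule.span_singleton_le_iff_mem _ _).2 hmem)
  intro x hx
  rw [← sub_add_cancel x (F (j + 1) x)]
  exact U.add_mem (hjU (sub_apply_mem_flag hF.toOrthogonalIdempotents hWF hx))
    (hline (Submodule.mem_map_of_mem (mem_flag.1 hx).1))

theorem IsIrreducibleUnder.le_of_mem (hW : IsIrreducibleUnder A B W)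
    (hF : IsSpectralDecomposition s B F φ) (hAF : ∀ i j, j + 1 < i → F i * A * F j = 0)
    (hthin : ∀ i, (W.map (F i)).IsPrincipal) (hlt : ∀ i < r, W.map (F i) = ⊥)
    (hv : v ∈ W.map (F r)) (hv0 : v ≠ 0) (hUA : U ∈ A.invtSubmodule) (hvU : v ∈ U) : W ≤ U := by
  obtain ⟨-, hWA, hWB⟩ := hW.prop
  have hWF := hF.mem_invtSubmodule_iff.1 hWB
  have hflag : ∀ j, r ≤ j → flag F W j ≤ U := by
    intro j hj
    induction j, hj using Nat.le_induction with
    | base =>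
      exact flag_le_of_map_le hF hlt <| (le_span_singleton_of_isPrincipal (hthin r) hv hv0).trans
        ((Submodule.span_singleton_le_iff_mem _ _).2 hvU)
    | succ j hrj ih =>
      by_cases hjA : flag F W j ∈ A.invtSubmodule
      · have hjB : flag F W j ∈ B.invtSubmodule :=
          hF.mem_invtSubmodule_iff.2 (flag_mem_invtSubmodule hF.toOrthogonalIdempotents hWF j)
        have hvj : v ∈ flag F W j := by
          obtain ⟨w, hw, rfl⟩ := hv
          exact apply_mem_flag hF.toOrthogonalIdempotents (hWF r) hrj hw
        have hWj : W ≤ flag F W j :=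
          hW.le_of_le ⟨Submodule.ne_bot_iff _ |>.2 ⟨v, hvj, hv0⟩, hjA, hjB⟩ inf_le_left
        exact inf_le_left.trans (hWj.trans ih)
      · exact flag_succ_le_of_notMem_invtSubmodule hF hAF hWA (hWF _) (hthin _) hUA ih hjA
  rw [← flag_eq_self (W := W) (j := max r (s.sup id)) hF fun k hk =>
    (Finset.le_sup (f := id) hk).trans (le_max_right _ _)]
  exact hflag _ (le_max_left _ _)

section EigenspaceComponents

variable {E : ι → Module.End K V} {θ : ι → K} {s' : Finset ι}

theorem IsIrreducibleUnder.span_range_apply_eq (hW : IsIrreducibleUnder A B W)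
    (hE : IsSpectralDecomposition s' A E θ) (hF : IsSpectralDecomposition s B F φ)
    (hAF : ∀ i j, j + 1 < i → F i * A * F j = 0) (hthin : ∀ i, (W.map (F i)).IsPrincipal)
    (hlt : ∀ i < r, W.map (F i) = ⊥) (hv : v ∈ W.map (F r)) (hv0 : v ≠ 0) :
    Submodule.span K (Set.range fun i => E i v) = W := by
  obtain ⟨-, hWA, hWB⟩ := hW.prop
  have hvW : v ∈ W :=
    (Module.End.mem_invtSubmodule_iff_map_le _).1 (hF.mem_invtSubmodule_iff.1 hWB r) hv
  refine le_antisymm (Submodule.span_le.2 ?_) (hW.le_of_mem hF hAF hthin hlt hv hv0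
    (hE.span_range_apply_mem_invtSubmodule v) (hE.mem_span_range_apply v))
  rintro _ ⟨i, rfl⟩
  exact hE.mem_invtSubmodule_iff.1 hWA i hvW

theorem map_eq_span_singleton (hE : OrthogonalIdempotents E)
    (hv : Submodule.span K (Set.range fun i => E i v) = W) (i : ι) :
    W.map (E i) = Submodule.span K {E i v} := by
  rw [← hv, Submodule.map_span]
  refine le_antisymm (Submodule.span_le.2 ?_) ((Submodule.span_singleton_le_iff_mem _ _).2
    (Submodule.subset_span ⟨E i v, ⟨i, rfl⟩, ?_⟩))
  · rintro _ ⟨_, ⟨k, rfl⟩, rfl⟩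
    rw [← Module.End.mul_apply, hE.mul_eq]
    split_ifs
    · exact Submodule.mem_span_singleton_self _
    · exact zero_mem _
  · rw [← Module.End.mul_apply, (hE.idem i).eq]

theorem linearIndependent_and_span_eq_of_span_range_apply_eq {κ : Type*}
    (hE : OrthogonalIdempotents E) (hv : Submodule.span K (Set.range fun i => E i v) = W)
    (f : κ ↪ ι) (hf : ∀ i, W.map (E i) ≠ ⊥ ↔ i ∈ Set.range f) :
    LinearIndependent K (fun k => E (f k) v) ∧
      Submodule.span K (Set.range fun k => E (f k) v) = W := by
  have hne : ∀ i, E i v ≠ 0 ↔ i ∈ Set.range f := fun i => by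
    rw [← hf, map_eq_span_singleton hE hv, Ne, Ne, Submodule.span_singleton_eq_bot]
  refine ⟨linearIndependent_orthogonalIdempotents_apply (hE.embedding f) fun k =>
    (hne _).2 ⟨k, rfl⟩, le_antisymm ?_ ?_⟩ <;> rw [← hv, Submodule.span_le]
  · rintro _ ⟨k, rfl⟩
    exact Submodule.subset_span ⟨f k, rfl⟩
  · rintro _ ⟨i, rfl⟩
    by_cases hi : E i v = 0
    · simpa only [hi] using! zero_mem _
    · obtain ⟨k, rfl⟩ := (hne i).1 hi
      exact Submodule.subset_span ⟨k, rfl⟩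

end EigenspaceComponents

end Irreducible

theorem mem_range_addLeft_fin {t d i : ℕ} :
    i ∈ Set.range (Fin.valEmbedding.trans (addLeftEmbedding t) : Fin (d + 1) ↪ ℕ) ↔
      t ≤ i ∧ i ≤ t + d := by
  refine ⟨?_, fun hi => ⟨⟨i - t, by omega⟩, Nat.add_sub_cancel' hi.1⟩⟩
  rintro ⟨k, rfl⟩
  exact ⟨Nat.le_add_right _ _, Nat.add_le_add_left k.is_le t⟩

theorem stmt8_general {K V : Type*} [Field K] [AddCommGroup V] [Module K V]
    {A Astar : Module.End K V} {E Estar : ℕ → Module.End K V} {θ θstar : ℕ → K}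
    {s sstar : Finset ℕ} {W : Submodule K V} {r t d : ℕ}
    (hE : IsSpectralDecomposition s A E θ)
    (hEstar : IsSpectralDecomposition sstar Astar Estar θstar)
    (hAEstar : ∀ i j, j + 1 < i → Estar i * A * Estar j = 0)
    (hAstarE : ∀ i j, j + 1 < i → E i * Astar * E j = 0)
    (hW : IsIrreducibleUnder A Astar W) (hthin : ∀ i, (W.map (Estar i)).IsPrincipal)
    (hr : ∀ i, W.map (Estar i) ≠ ⊥ ↔ r ≤ i ∧ i ≤ r + d)
    (ht : ∀ i, W.map (E i) ≠ ⊥ ↔ t ≤ i ∧ i ≤ t + d) :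
    ∀ u ∈ W.map (E t), u ≠ 0 → ∀ v ∈ W.map (Estar r), v ≠ 0 →
      (LinearIndependent K (fun i : Fin (d + 1) => Estar (r + i) u) ∧
        Submodule.span K (Set.range fun i : Fin (d + 1) => Estar (r + i) u) = W) ∧
      (LinearIndependent K (fun i : Fin (d + 1) => E (t + i) v) ∧
        Submodule.span K (Set.range fun i : Fin (d + 1) => E (t + i) v) = W) := by
  intro u hu hu0 v hv hv0
  have hspan_v := hW.span_range_apply_eq hE hEstar hAEstar hthin
    (fun i hi => not_not.1 fun h => hi.not_ge ((hr i).1 h).1) hv hv0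
  have hdualThin : ∀ i, (W.map (E i)).IsPrincipal := fun i =>
    ⟨E i v, map_eq_span_singleton hE.toOrthogonalIdempotents hspan_v i⟩
  have hspan_u := hW.symm.span_range_apply_eq hEstar hE hAstarE hdualThin
    (fun i hi => not_not.1 fun h => hi.not_ge ((ht i).1 h).1) hu hu0
  exact ⟨linearIndependent_and_span_eq_of_span_range_apply_eq hEstar.toOrthogonalIdempotents
      hspan_u _ fun i => (hr i).trans mem_range_addLeft_fin.symm,
    linearIndependent_and_span_eq_of_span_range_apply_eq hE.toOrthogonalIdempotents
      hspan_v _ fun i => (ht i).trans mem_range_addLeft_fin.symm⟩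

section Trace

variable {n 𝕜 : Type*} [Fintype n] [RCLike 𝕜]

open scoped ComplexOrder in
theorem mul_mul_eq_zero_of_trace_eq_zero {P H Q : Matrix n n 𝕜} (hP : IsStarProjection P)
    (hH : H.IsHermitian) (hQ : IsStarProjection Q) (htr : (P * H * Q * H).trace = 0) :
    P * H * Q = 0 := by
  have hP' : Pᴴ = P := hP.isSelfAdjoint
  have hQ' : Qᴴ = Q := hQ.isSelfAdjoint
  rw [← Matrix.trace_mul_conjTranspose_self_eq_zero_iff]
  calc (P * H * Q * (P * H * Q)ᴴ).trace = (P * H * Q * (Q * H * P)).trace := by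
        simp only [conjTranspose_mul, hH.eq, hP', hQ', mul_assoc]
    _ = (P * P * H * (Q * Q) * H).trace := by
        rw [← mul_assoc, trace_mul_comm]
        simp only [mul_assoc]
    _ = 0 := by rw [hP.isIdempotentElem.eq, hQ.isIdempotentElem.eq, htr]

end Trace

namespace TSetup

variable (S : TSetup X)

theorem orthogonalIdempotents_E : OrthogonalIdempotents S.E := by
  rw [OrthogonalIdempotents.iff_mul_eq]
  intro i j
  by_cases hi : i ≤ S.D
  · by_cases hj : j ≤ S.D
    · exact S.hEidem i j hi hj
    · rw [S.hEzero j (by omega), mul_zero, if_neg (by omega)]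
  · rw [S.hEzero i (by omega), zero_mul, ite_self]

theorem isSpectralDecomposition_A :
    IsSpectralDecomposition (Finset.range (S.D + 1)) S.A S.E fun i => (S.θ i : ℂ) where
  toOrthogonalIdempotents := S.orthogonalIdempotents_E
  sum_eq_one := S.hEsum
  eq_sum := S.hAspec
  injOn i hi j hj h := S.hθinj i j (Finset.mem_range_succ_iff.1 hi) (Finset.mem_range_succ_iff.1 hj)
    (Complex.ofReal_injective h)

theorem Estar_eq_diagonal (i : ℕ) :
    S.Estar i = diagonal fun y => if S.G.dist S.x y = i then 1 else 0 := by
  ext y z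
  rw [diagonal_apply]
  by_cases hi : i ≤ S.D
  · rw [S.hEstar i hi, ite_and]
  · have hne : S.G.dist S.x y ≠ i := fun h => hi (h ▸ S.hDiamLe S.x y)
    rw [S.hEstarzero i (by omega), if_neg hne, ite_self, Matrix.zero_apply]

theorem orthogonalIdempotents_Estar : OrthogonalIdempotents S.Estar := by
  rw [OrthogonalIdempotents.iff_mul_eq]
  intro i j
  simp only [Estar_eq_diagonal, diagonal_mul_diagonal]
  split_ifs with hij
  · congr! 2 with y
    simp only [hij, ite_zero_mul_ite_zero, and_self, mul_one]
  · rw [← diagonal_zero]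
    congr! 2 with y
    rw [ite_zero_mul_ite_zero, if_neg fun h => hij (h.1.symm.trans h.2)]

theorem sum_Estar : ∑ i ∈ Finset.range (S.D + 1), S.Estar i = 1 := by
  ext y z
  simp only [Estar_eq_diagonal, Matrix.sum_apply, diagonal_apply, one_apply]
  split_ifs
  · rw [Finset.sum_ite_eq, if_pos (Finset.mem_range_succ_iff.2 (S.hDiamLe S.x y))]
  · exact Finset.sum_const_zero

theorem isSpectralDecomposition_Astar :
    IsSpectralDecomposition (Finset.range (S.D + 1)) S.Astar S.Estar fun i => (S.θstar i : ℂ) where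
  toOrthogonalIdempotents := S.orthogonalIdempotents_Estar
  sum_eq_one := S.sum_Estar
  eq_sum := S.hAstarspec
  injOn i hi j hj h := S.hθstarinj i j (Finset.mem_range_succ_iff.1 hi)
    (Finset.mem_range_succ_iff.1 hj) (Complex.ofReal_injective h)

theorem Estar_mul_A_mul_Estar {i j : ℕ} (hij : j + 1 < i) : S.Estar i * S.A * S.Estar j = 0 := by
  ext y z
  simp only [Estar_eq_diagonal, mul_diagonal, diagonal_mul, S.hA, Matrix.zero_apply, mul_ite,
    mul_one, mul_zero, ite_eq_right_iff]
  intro hz hyz hy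
  have htriangle := S.hGconn.dist_triangle (u := S.x) (v := z) (w := y)
  rw [SimpleGraph.dist_eq_one_iff_adj.2 hyz.symm] at htriangle
  omega

theorem isStarProjection_E (i : ℕ) : IsStarProjection (S.E i) where
  isIdempotentElem := S.orthogonalIdempotents_E.idem i
  isSelfAdjoint := by
    rw [IsSelfAdjoint, star_eq_conjTranspose, conjTranspose, S.hEsymm]
    exact S.hEreal i

theorem Astar_eq_diagonal : S.Astar = diagonal ((Fintype.card X : ℂ) • S.E 1 S.x) := by
  ext y z
  rw [S.hAstar, diagonal_apply, Pi.smul_apply, smul_eq_mul]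

theorem isHermitian_Astar : S.Astar.IsHermitian := by
  rw [Astar_eq_diagonal, isHermitian_diagonal_iff]
  intro y
  have hreal : starRingEnd ℂ (S.E 1 S.x y) = S.E 1 S.x y := congr_fun₂ (S.hEreal 1) S.x y
  rw [Pi.smul_apply, smul_eq_mul]
  exact (IsSelfAdjoint.natCast _).mul hreal

theorem E_mul_hadamard {h i j : ℕ} (hh : h ≤ S.D) (hi : i ≤ S.D) (hj : j ≤ S.D) :
    S.E h * (S.E i ⊙ S.E j) = ((Fintype.card X : ℂ)⁻¹ * S.q h i j) • S.E h := by
  rw [S.hKrein i j hi hj, mul_smul_comm, Finset.mul_sum,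
    Finset.sum_eq_single_of_mem h (Finset.mem_range_succ_iff.2 hh) fun k _ hkh => ?_,
    mul_smul_comm, (S.orthogonalIdempotents_E.idem h).eq, mul_smul]
  rw [mul_smul_comm, S.orthogonalIdempotents_E.ortho hkh.symm, smul_zero]

theorem trace_E_mul_Astar_mul_E_mul_Astar (i j : ℕ) :
    (S.E i * S.Astar * S.E j * S.Astar).trace =
      (Fintype.card X : ℂ) ^ 2 * ((S.E 1 * (S.E i ⊙ S.E j)) S.x ⬝ᵥ S.E 1 S.x) := by
  have hsymm : (S.E j * S.Astar)ᵀ = S.Astar * S.E j := by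
    rw [transpose_mul, S.hEsymm, Astar_eq_diagonal, diagonal_transpose]
  calc (S.E i * S.Astar * S.E j * S.Astar).trace
      = (S.Astar * S.E i * (S.E j * S.Astar)ᵀ).trace := by
        rw [hsymm, trace_mul_comm]
        simp only [mul_assoc]
    _ = (Fintype.card X : ℂ) ^ 2 * ((S.E 1 * (S.E i ⊙ S.E j)) S.x ⬝ᵥ S.E 1 S.x) := by
        rw [Astar_eq_diagonal, ← dotProduct_vecMul_hadamard, smul_vecMul, smul_dotProduct,
          dotProduct_smul, smul_smul, mul_apply_eq_vecMul, sq, smul_eq_mul]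

theorem E_mul_Astar_mul_E {i j : ℕ} (hij : j + 1 < i) : S.E i * S.Astar * S.E j = 0 := by
  by_cases hi : i ≤ S.D
  · refine mul_mul_eq_zero_of_trace_eq_zero (S.isStarProjection_E i) S.isHermitian_Astar
      (S.isStarProjection_E j) ?_
    have hq : S.q 1 i j = 0 := S.hQpoly0 1 i j (by omega) hi (by omega) (by omega)
    rw [trace_E_mul_Astar_mul_E_mul_Astar, S.E_mul_hadamard (by omega) hi (by omega), hq]
    rw [Complex.ofReal_zero, mul_zero, zero_smul, show (0 : Matrix X X ℂ) S.x = 0 from rfl,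
      zero_dotProduct, mul_zero]
  · rw [S.hEzero i (by omega), zero_mul, zero_mul]

end TSetup

theorem TMod.isIrreducibleUnder {S : TSetup X} (M : TMod S) :
    IsIrreducibleUnder S.A.mulVecLin S.Astar.mulVecLin M.W := by
  refine ⟨⟨M.hWne, M.hWinv _ (Algebra.subset_adjoin (by simp)),
    M.hWinv _ (Algebra.subset_adjoin (by simp))⟩, fun U ⟨hU, hUA, hUAstar⟩ hUW => ?_⟩
  have hUT : ∀ B ∈ S.T, ∀ w ∈ U, B *ᵥ w ∈ U := fun B hB =>
    mem_invtSubmodule_of_mem_adjoin (toLinAlgEquiv' : Matrix X X ℂ ≃ₐ[ℂ] _).toAlgHom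
      (by rintro _ (rfl | rfl); exacts [hUA, hUAstar]) hB
  exact ((M.hWirr U hUW hUT).resolve_left hU).ge

/-- For nonzero `u ∈ E_t W` and nonzero `v ∈ E*_r W`, `{E*_{r+i} u}_{i=0}^d` and
`{E_{t+i} v}_{i=0}^d` are bases for `W`. -/
theorem stmt8 (S : TSetup X) (M : TMod S) (hd : 0 < M.d) :
    ∀ u ∈ M.W.map (S.E M.t).mulVecLin, u ≠ 0 →
    ∀ v ∈ M.W.map (S.Estar M.r).mulVecLin, v ≠ 0 →
      (LinearIndependent ℂ (fun i : Fin (M.d + 1) => S.Estar (M.r + i) *ᵥ u) ∧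
        Submodule.span ℂ
          (Set.range fun i : Fin (M.d + 1) => S.Estar (M.r + i) *ᵥ u) = M.W) ∧
      (LinearIndependent ℂ (fun i : Fin (M.d + 1) => S.E (M.t + i) *ᵥ v) ∧
        Submodule.span ℂ
          (Set.range fun i : Fin (M.d + 1) => S.E (M.t + i) *ᵥ v) = M.W) := by
  exact stmt8_general (S.isSpectralDecomposition_A.map toLinAlgEquiv'.toAlgHom)
    (S.isSpectralDecomposition_Astar.map toLinAlgEquiv'.toAlgHom)
    (fun i j hij => by simpa using congrArg toLinAlgEquiv' (S.Estar_mul_A_mul_Estar hij))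
    (fun i j hij => by simpa using congrArg toLinAlgEquiv' (S.E_mul_Astar_mul_E hij))
    M.isIrreducibleUnder (fun i => (Submodule.finrank_le_one_iff_isPrincipal _).1 (M.hthin i))
    M.hr M.ht
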